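/- arXiv:1411.0328 — 5 statements merged into one kernel-verified Lean document; each statement's English description precedes it below -/
import Mathlib

section
/- Let γ > 1, d ≥ 1, let q : ℝ² → ℝ × ℝ^d × ℝ be an affine map, let S ⊆ ℝ² be a convex set on which the density (first) component of q(θ) is strictly positive, and let ε ∈ ℝ. Then the superlevel set S^p := {θ ∈ S : p(q(θ)) ≥ ε} is convex, where p is the pressure function. -/
/-- The pressure function of the compressible Euler equations, as a function of the
conserved variables `q = (ρ, m, E)` (density, momentum, energy):
`p(q) = (γ - 1) (E - ‖m‖² / (2ρ))`. -/
noncomputable def pressure (d : ℕ) (γ : ℝ)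
    (q : ℝ × EuclideanSpace ℝ (Fin d) × ℝ) : ℝ :=
  (γ - 1) * (q.2.2 - ‖q.2.1‖ ^ 2 / (2 * q.1))

theorem quad_over_lin_aux (a b r s n k N : ℝ) (ha : 0 ≤ a) (hb : 0 ≤ b)
    (hr : 0 < r) (hs : 0 < s) (hden : 0 < a * r + b * s) (hN0 : 0 ≤ N)
    (hN : N ≤ a * n + b * k) :
    N ^ 2 / (2 * (a * r + b * s)) ≤ a * (n ^ 2 / (2 * r)) + b * (k ^ 2 / (2 * s)) := by
  have h1 : N ^ 2 ≤ (a * n + b * k) ^ 2 := pow_le_pow_left₀ hN0 hN 2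
  rw [div_le_iff₀ (by positivity)]
  have h2 : (a * (n ^ 2 / (2 * r)) + b * (k ^ 2 / (2 * s))) * (2 * (a * r + b * s))
      = (a * n + b * k) ^ 2 + a * b * ((n * s - k * r) ^ 2 / (r * s)) := by
    field_simp
    ring
  rw [h2]
  have h3 : 0 ≤ a * b * ((n * s - k * r) ^ 2 / (r * s)) := by positivity
  linarith

/-- If `q` is an affine map of the limiting parameters `θ ∈ ℝ²` and `S ⊆ ℝ²` is a convex
set on which the density (first) component of `q(θ)` is strictly positive, then for any
`ε ∈ ℝ` the superlevel set `Sᵖ := {θ ∈ S : p(q(θ)) ≥ ε}` is convex. -/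
theorem pressure_superlevel_convex (d : ℕ) (hd : 1 ≤ d) (γ : ℝ) (hγ : 1 < γ)
    (q : (ℝ × ℝ) →ᵃ[ℝ] ℝ × EuclideanSpace ℝ (Fin d) × ℝ)
    (S : Set (ℝ × ℝ)) (hS : Convex ℝ S)
    (hpos : ∀ θ ∈ S, 0 < (q θ).1) (ε : ℝ) :
    Convex ℝ {θ ∈ S | pressure d γ (q θ) ≥ ε} := by
  rintro x ⟨hx, hpx⟩ y ⟨hy, hpy⟩ a b ha hb hab
  have hz := hS hx hy ha hb hab
  refine ⟨hz, ?_⟩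
  have hq : q (a • x + b • y) = a • q x + b • q y := Convex.combo_affine_apply hab
  have hz' := hpos _ hz
  have hrx := hpos x hx
  have hry := hpos y hy
  rw [hq] at hz'
  simp only [pressure, ge_iff_le] at hpx hpy ⊢
  rw [hq]
  simp only [Prod.fst_add, Prod.snd_add, Prod.smul_fst, Prod.smul_snd, smul_eq_mul] at hz' ⊢
  have hN : ‖a • (q x).2.1 + b • (q y).2.1‖ ≤ a * ‖(q x).2.1‖ + b * ‖(q y).2.1‖ := by
    refine (norm_add_le _ _).trans ?_
    rw [norm_smul, norm_smul, Real.norm_of_nonneg ha, Real.norm_of_nonneg hb]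
  have key := quad_over_lin_aux a b _ _ _ _ _ ha hb hrx hry hz' (norm_nonneg _) hN
  have h1 := mul_le_mul_of_nonneg_left key (sub_nonneg.2 hγ.le)
  have h2 := mul_le_mul_of_nonneg_left hpx ha
  have h3 := mul_le_mul_of_nonneg_left hpy hb
  have h4 : a * ε + b * ε = ε := by rw [← add_mul, hab, one_mul]
  linarith
end

section
/- (Density limiter, Case 4b.) Let Δf₋, Δf₊, ε, ρ̂ be real numbers with ε − ρ̂ ≤ 0, Δf₋ < 0, Δf₊ > 0, and suppose the inequality fails at (θ₋, θ₊) = (1,1), i.e. Δf₋ − Δf₊ < ε − ρ̂. Set Λ := (ε − ρ̂)/(Δf₋ − Δf₊). Then Λ ∈ [0,1), and for every (θ₋, θ₊) ∈ [0, Λ] × [0, Λ] one has θ₋ Δf₋ − θ₊ Δf₊ ≥ ε − ρ̂. -/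
/-- Density limiter, Case 4b: if `Δf₋ < 0`, `Δf₊ > 0` and the positivity inequality
fails at `(θ₋, θ₊) = (1,1)`, i.e. `Δf₋ − Δf₊ < ε − ρ̂`, then with
`Λ := (ε − ρ̂)/(Δf₋ − Δf₊)` one has `Λ ∈ [0,1)`, and the density positivity inequality
`θ₋ Δf₋ − θ₊ Δf₊ ≥ ε − ρ̂` holds for every `(θ₋, θ₊) ∈ [0,Λ] × [0,Λ]`. -/
theorem density_limiter_case4b (Δfm Δfp ε ρhat : ℝ) (hερ : ε - ρhat ≤ 0)
    (h₁ : Δfm < 0) (h₂ : Δfp > 0) (hfail : Δfm - Δfp < ε - ρhat) :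
    (ε - ρhat) / (Δfm - Δfp) ∈ Set.Ico (0 : ℝ) 1 ∧
    ∀ θm ∈ Set.Icc (0 : ℝ) ((ε - ρhat) / (Δfm - Δfp)),
      ∀ θp ∈ Set.Icc (0 : ℝ) ((ε - ρhat) / (Δfm - Δfp)),
        θm * Δfm - θp * Δfp ≥ ε - ρhat := by
  have hD : Δfm - Δfp < 0 := by linarith
  have hmul : (ε - ρhat) / (Δfm - Δfp) * (Δfm - Δfp) = ε - ρhat :=
    div_mul_cancel₀ _ hD.ne
  refine ⟨⟨div_nonneg_of_nonpos hερ hD.le, ?_⟩, ?_⟩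
  · rw [div_lt_one_of_neg hD]
    exact hfail
  · rintro θm ⟨_, hm⟩ θp ⟨_, hp⟩
    have a := mul_le_mul_of_nonpos_right hm h₁.le
    have b := mul_le_mul_of_nonneg_right hp h₂.le
    rw [mul_sub] at hmul
    linarith
end

section
/- (Unified multidimensional density-limiter bound.) Let n ≥ 1, let c : Fin n → ℝ, and let D ≤ 0 be real. Let S := Σ_{j : c_j < 0} c_j, and define Λ_j := 1 if c_j ≥ 0 and Λ_j := min(1, D/S) if c_j < 0. Then for every θ : Fin n → ℝ with 0 ≤ θ_j ≤ Λ_j for all j, one has Σ_j θ_j c_j ≥ D. -/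
open Finset in
/-- Unified multidimensional density-limiter bound: with `S` the sum of the negative
coefficients `c j`, and `Λ j := 1` for `c j ≥ 0`, `Λ j := min(1, D/S)` for `c j < 0`,
every `θ` with `0 ≤ θ j ≤ Λ j` satisfies `∑ j, θ j * c j ≥ D` whenever `D ≤ 0`. -/
theorem density_limiter_multiD (n : ℕ) (hn : 1 ≤ n) (c : Fin n → ℝ) (D : ℝ) (hD : D ≤ 0)
    (S : ℝ) (hS : S = ∑ j ∈ Finset.univ.filter (fun j => c j < 0), c j)
    (Λ : Fin n → ℝ) (hΛ : ∀ j, Λ j = if c j < 0 then min 1 (D / S) else 1) :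
    ∀ θ : Fin n → ℝ, (∀ j, 0 ≤ θ j) → (∀ j, θ j ≤ Λ j) →
      ∑ j, θ j * c j ≥ D := by
  intro θ h0 h1
  have key : D / S * S ≤ ∑ j, θ j * c j := by
    have e : D / S * S = ∑ j, D / S * (if c j < 0 then c j else 0) := by
      rw [← Finset.mul_sum, ← Finset.sum_filter, ← hS]
    rw [e]
    apply Finset.sum_le_sum
    intro j _
    have hj := h1 j
    rw [hΛ j] at hj
    by_cases hc : c j < 0
    · simp only [hc, if_true] at hj ⊢
      exact mul_le_mul_of_nonpos_right (hj.trans (min_le_right _ _)) hc.le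
    · simp only [hc, if_false, mul_zero]
      exact mul_nonneg (h0 j) (not_lt.mp hc)
  refine le_trans ?_ key
  by_cases hz : S = 0
  · simpa [hz] using hD
  · rw [div_mul_cancel₀ _ hz]
end

section
/- (Step-2 rectangle lemma, 1D.) Let Λ₁, Λ₂ ≥ 0, let ε ∈ ℝ, and let P : ℝ² → ℝ be concave on the rectangle [0, Λ₁] × [0, Λ₂]. Suppose there exist r₁₀, r₀₁, r₁₁ ∈ [0,1] such that P(0,0) ≥ ε, P(r₁₀Λ₁, 0) ≥ ε, P(0, r₀₁Λ₂) ≥ ε, and P(r₁₁Λ₁, r₁₁Λ₂) ≥ ε. Then P(θ₁, θ₂) ≥ ε for every (θ₁, θ₂) with 0 ≤ θ₁ ≤ min(r₁₀, r₁₁)·Λ₁ and 0 ≤ θ₂ ≤ min(r₀₁, r₁₁)·Λ₂. -/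
theorem exists_scale (θ m L : ℝ) (hm : 0 ≤ m) (hL : 0 ≤ L) (h0 : 0 ≤ θ) (h1 : θ ≤ m * L) :
    ∃ s : ℝ, 0 ≤ s ∧ s ≤ m ∧ θ = s * L := by
  rcases hL.eq_or_lt with rfl | hL
  · exact ⟨0, le_rfl, hm, by linarith⟩
  · exact ⟨θ / L, by positivity, by rwa [div_le_iff₀ hL], by field_simp⟩

/-- Step-2 rectangle lemma (1D): if `P` is concave on the rectangle `[0,Λ₁] × [0,Λ₂]`
and the pressure bound `P ≥ ε` holds at the origin and at the rescaled vertices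
`(r₁₀Λ₁, 0)`, `(0, r₀₁Λ₂)` and `(r₁₁Λ₁, r₁₁Λ₂)`, then `P ≥ ε` on the sub-rectangle
`[0, min(r₁₀,r₁₁)Λ₁] × [0, min(r₀₁,r₁₁)Λ₂]`. -/
theorem step2_rectangle_1d (Λ₁ Λ₂ : ℝ) (hΛ₁ : 0 ≤ Λ₁) (hΛ₂ : 0 ≤ Λ₂) (ε : ℝ)
    (P : ℝ × ℝ → ℝ) (hP : ConcaveOn ℝ (Set.Icc (0 : ℝ) Λ₁ ×ˢ Set.Icc (0 : ℝ) Λ₂) P)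
    (r₁₀ r₀₁ r₁₁ : ℝ)
    (hr₁₀ : r₁₀ ∈ Set.Icc (0 : ℝ) 1) (hr₀₁ : r₀₁ ∈ Set.Icc (0 : ℝ) 1)
    (hr₁₁ : r₁₁ ∈ Set.Icc (0 : ℝ) 1)
    (h00 : P (0, 0) ≥ ε) (h10 : P (r₁₀ * Λ₁, 0) ≥ ε) (h01 : P (0, r₀₁ * Λ₂) ≥ ε)
    (h11 : P (r₁₁ * Λ₁, r₁₁ * Λ₂) ≥ ε) :
    ∀ θ₁ θ₂ : ℝ, 0 ≤ θ₁ → θ₁ ≤ min r₁₀ r₁₁ * Λ₁ → 0 ≤ θ₂ → θ₂ ≤ min r₀₁ r₁₁ * Λ₂ →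
      P (θ₁, θ₂) ≥ ε := by
  intro θ₁ θ₂ h1 h1' h2 h2'
  have hC := hP.convex_ge ε
  obtain ⟨ha0, ha1⟩ := hr₁₀
  obtain ⟨hb0, hb1⟩ := hr₀₁
  obtain ⟨hr0, hr1⟩ := hr₁₁
  have hle : ∀ r L : ℝ, 0 ≤ L → r ≤ 1 → r * L ≤ L := fun r L hL hr => by nlinarith
  set C : Set (ℝ × ℝ) := {x | x ∈ Set.Icc (0 : ℝ) Λ₁ ×ˢ Set.Icc (0 : ℝ) Λ₂ ∧ ε ≤ P x} with hCdef
  have m00 : (0 : ℝ × ℝ) ∈ C := ⟨⟨⟨le_rfl, hΛ₁⟩, ⟨le_rfl, hΛ₂⟩⟩, h00⟩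
  have m10 : (r₁₀ * Λ₁, (0 : ℝ)) ∈ C :=
    ⟨⟨⟨by positivity, hle _ _ hΛ₁ ha1⟩, ⟨le_rfl, hΛ₂⟩⟩, h10⟩
  have m01 : ((0 : ℝ), r₀₁ * Λ₂) ∈ C :=
    ⟨⟨⟨le_rfl, hΛ₁⟩, ⟨by positivity, hle _ _ hΛ₂ hb1⟩⟩, h01⟩
  have m11 : (r₁₁ * Λ₁, r₁₁ * Λ₂) ∈ C :=
    ⟨⟨⟨by positivity, hle _ _ hΛ₁ hr1⟩, ⟨by positivity, hle _ _ hΛ₂ hr1⟩⟩, h11⟩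
  have scale : ∀ (A : ℝ × ℝ) (r t : ℝ), 0 ≤ r → 0 ≤ t → t ≤ r → r • A ∈ C → t • A ∈ C := by
    intro A r t hr ht htr hA
    obtain ⟨c, hc0, hc1, rfl⟩ := exists_scale t 1 r zero_le_one hr ht (by linarith)
    rw [mul_smul]
    exact hC.smul_mem_of_zero_mem m00 hA ⟨hc0, hc1⟩
  obtain ⟨s, hs0, hs1, rfl⟩ := exists_scale θ₁ _ Λ₁ (le_min ha0 hr0) hΛ₁ h1 h1'
  obtain ⟨t, ht0, ht1, rfl⟩ := exists_scale θ₂ _ Λ₂ (le_min hb0 hr0) hΛ₂ h2 h2'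
  obtain ⟨hsa, hsr⟩ := le_min_iff.1 hs1
  obtain ⟨htb, htr⟩ := le_min_iff.1 ht1
  have key : (s * Λ₁, t * Λ₂) ∈ C := by
    rcases le_total s t with hst | hst
    · have e1 := scale (0, Λ₂) r₀₁ t hb0 ht0 htb (by simpa using m01)
      have e2 := scale (Λ₁, Λ₂) r₁₁ t hr0 ht0 htr (by simpa using m11)
      obtain ⟨c, hc0, hc1, rfl⟩ := exists_scale s 1 t zero_le_one ht0 hs0 (by linarith)
      have := hC e1 e2 (sub_nonneg.2 hc1) hc0 (by ring)
      convert this using 1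
      ext <;> simp <;> ring
    · have e1 := scale (Λ₁, 0) r₁₀ s ha0 hs0 hsa (by simpa using m10)
      have e2 := scale (Λ₁, Λ₂) r₁₁ s hr0 hs0 hsr (by simpa using m11)
      obtain ⟨c, hc0, hc1, rfl⟩ := exists_scale t 1 s zero_le_one hs0 ht0 (by linarith)
      have := hC e1 e2 (sub_nonneg.2 hc1) hc0 (by ring)
      convert this using 1
      ext <;> simp <;> ring
  exact key.2
end

section
/- (Step-2 hypercube lemma, 2D.) Let Λ : Fin 4 → ℝ with Λ_j ≥ 0 for all j, let ε ∈ ℝ, and let P : (Fin 4 → ℝ) → ℝ be concave on the box B := Π_j [0, Λ_j]. Suppose for every vertex v ∈ {0,1}⁴ there is r_v ∈ [0,1] such that P(r_v · (v₁Λ₁, v₂Λ₂, v₃Λ₃, v₄Λ₄)) ≥ ε. Then P(θ) ≥ ε for every θ with 0 ≤ θ_j ≤ m_j Λ_j for all j, where m_j := min over the vertices v with v_j = 1 of r_v. -/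
/-- Step-2 hypercube lemma (2D): let `P` be concave on the box `Π_j [0, Λ j]`, and
suppose for every vertex `v ∈ {0,1}⁴` there is a rescaling factor `r v ∈ [0,1]` with
`P(r v • (v₁Λ₁, v₂Λ₂, v₃Λ₃, v₄Λ₄)) ≥ ε`.  Then `P θ ≥ ε` for every `θ` with
`0 ≤ θ j ≤ m j * Λ j` for all `j`, where `m j` is the minimum of `r v` over the
vertices `v` with `v j = 1` (expressed below by requiring `θ j ≤ r v * Λ j` for all
such vertices, which is equivalent since `Λ j ≥ 0`). -/
theorem step2_hypercube_2d (Λ : Fin 4 → ℝ) (hΛ : ∀ j, 0 ≤ Λ j) (ε : ℝ)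
    (P : (Fin 4 → ℝ) → ℝ)
    (hP : ConcaveOn ℝ (Set.univ.pi fun j => Set.Icc (0 : ℝ) (Λ j)) P)
    (r : (Fin 4 → Bool) → ℝ) (hr : ∀ v, r v ∈ Set.Icc (0 : ℝ) 1)
    (hvert : ∀ v : Fin 4 → Bool, P (fun j => r v * (if v j then Λ j else 0)) ≥ ε) :
    ∀ θ : Fin 4 → ℝ, (∀ j, 0 ≤ θ j) →
      (∀ j, ∀ v : Fin 4 → Bool, v j = true → θ j ≤ r v * Λ j) →
      P θ ≥ ε := by
  intro θ h0 h1
  let B : (Fin 4 → Bool) → (Fin 4 → ℝ) := fun v j => r v * (if v j then Λ j else 0)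
  have hsub : convexHull ℝ (Set.range B) ⊆
      {x ∈ (Set.univ.pi fun j => Set.Icc (0 : ℝ) (Λ j)) | ε ≤ P x} := by
    refine convexHull_min ?_ (hP.convex_ge ε)
    rintro _ ⟨v, rfl⟩
    refine ⟨?_, hvert v⟩
    intro j _
    obtain ⟨ha, hb⟩ := hr v
    have hj := hΛ j
    by_cases hv : v j = true
    · simp only [B, hv, if_true]
      exact ⟨mul_nonneg ha hj, mul_le_of_le_one_left hj hb⟩
    · simp [B, hv, hj]
  suffices hmem : θ ∈ convexHull ℝ (Set.range B) from (hsub hmem).2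
  by_contra hn
  obtain ⟨f, u, hf, hu⟩ := geometric_hahn_banach_closed_point
    (convex_convexHull ℝ (Set.range B)) ((Set.finite_range B).isClosed_convexHull ℝ) hn
  have hrep : ∀ x : Fin 4 → ℝ, f x = ∑ j, x j * f (fun i => if j = i then 1 else 0) := by
    intro x
    have := LinearMap.pi_apply_eq_sum_univ (f : (Fin 4 → ℝ) →ₗ[ℝ] ℝ) x
    simpa using this
  let v : Fin 4 → Bool := fun j => decide (0 < f (fun i => if j = i then 1 else 0))
  have h2 := hf (B v) (subset_convexHull ℝ _ ⟨v, rfl⟩)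
  have h3 : f θ ≤ f (B v) := by
    rw [hrep θ, hrep (B v)]
    refine Finset.sum_le_sum fun j _ => ?_
    by_cases hv : 0 < f (fun i => if j = i then 1 else 0)
    · have hvj : v j = true := decide_eq_true hv
      have hB : B v j = r v * Λ j := by simp only [B, hvj, if_true]
      rw [hB]
      exact mul_le_mul_of_nonneg_right (h1 j v hvj) hv.le
    · have hvj : v j = false := decide_eq_false hv
      have hB : B v j = 0 := by simp [B, hvj]
      rw [hB, zero_mul]
      exact mul_nonpos_of_nonneg_of_nonpos (h0 j) (not_lt.mp hv)
  linarith
end
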